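/- Let f : B → A be a homomorphism of commutative rings. Then f is pure as a morphism of B-modules if and only if for every B-module N the unit map η_N : N → (N ⊗_B A)^co, η_N(n) = n ⊗ 1, is bijective, where (N ⊗_B A)^co = {q ∈ N ⊗_B A : (the image of q under n⊗a ↦ n⊗1⊗a) = (the image of q under n⊗a ↦ n⊗a⊗1) in N ⊗_B A ⊗_B A}. (In other words, the comparison functor to comodules over the canonical coring is fully faithful if and only if f is pure.) -/

import Mathlib

open TensorProduct

universe u

/-- The map `n ↦ n ⊗ 1`. -/
noncomputable def unitMap (B A : Type u) [CommRing B] [CommRing A] [Algebra B A]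
    (N : Type u) [AddCommGroup N] [Module B N] : N →ₗ[B] N ⊗[B] A :=
  (TensorProduct.mk B N A).flip 1

/-- The map `n ⊗ a ↦ (n ⊗ 1) ⊗ a`. -/
noncomputable def coactMap (B A : Type u) [CommRing B] [CommRing A] [Algebra B A]
    (N : Type u) [AddCommGroup N] [Module B N] :
    N ⊗[B] A →ₗ[B] (N ⊗[B] A) ⊗[B] A :=
  LinearMap.rTensor A (unitMap B A N)

/-- The map `n ⊗ a ↦ (n ⊗ a) ⊗ 1`. -/
noncomputable def insMap (B A : Type u) [CommRing B] [CommRing A] [Algebra B A]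
    (N : Type u) [AddCommGroup N] [Module B N] :
    N ⊗[B] A →ₗ[B] (N ⊗[B] A) ⊗[B] A :=
  unitMap B A (N ⊗[B] A)

/-!
Let `C` be the cokernel of `N → N ⊗ P`, `n ↦ n ⊗ p`. Since `n ⊗ x ↦ (n ⊗ p) ⊗ x` dies in `C ⊗ P`,
a coinvariant `q`, whose two images in `(N ⊗ P) ⊗ P` agree, has a class `c` in `C` with
`c ⊗ p = 0`. Purity applied to `C` gives `c = 0`, so `q` comes from `N`.
-/

universe v v' w

section Semiring

variable (R : Type u) [CommSemiring R] {P : Type w} [AddCommMonoid P] [Module R P] (p : P)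
  (N : Type v) [AddCommMonoid N] [Module R N]

/-- The map `n ↦ n ⊗ p` attached to a module `P` with a chosen element `p`. It is the unit map when
`P` is an algebra and `p = 1`; only the element, not the multiplication, is needed. -/
noncomputable def tensorPoint : N →ₗ[R] N ⊗[R] P :=
  (TensorProduct.mk R N P).flip p

/-- The coinvariants of `N ⊗ P` with respect to `p : P`: the equalizer of `n ⊗ x ↦ (n ⊗ p) ⊗ x`
and `n ⊗ x ↦ (n ⊗ x) ⊗ p`, as a submodule. -/
noncomputable def coinvariants : Submodule R (N ⊗[R] P) :=
  LinearMap.eqLocus ((tensorPoint R p N).rTensor P) (tensorPoint R p (N ⊗[R] P))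

variable {R N}

theorem rTensor_tensorPoint {Q : Type v'} [AddCommMonoid Q] [Module R Q] (g : N →ₗ[R] Q) (n : N) :
    g.rTensor P (tensorPoint R p N n) = tensorPoint R p Q (g n) :=
  LinearMap.rTensor_tmul P g p n

theorem range_tensorPoint_le_coinvariants :
    LinearMap.range (tensorPoint R p N) ≤ coinvariants R p N := by
  rintro _ ⟨n, rfl⟩
  exact rTensor_tensorPoint p (tensorPoint R p N) n

end Semiring

section Ring

variable {R : Type u} [CommRing R] {P : Type w} [AddCommGroup P] [Module R P] (p : P)
  {N : Type v} [AddCommGroup N] [Module R N]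

theorem tensorPoint_mkQ_range_eq_zero {q : N ⊗[R] P} (hq : q ∈ coinvariants R p N) :
    tensorPoint R p _ ((LinearMap.range (tensorPoint R p N)).mkQ q) = 0 := by
  set π := (LinearMap.range (tensorPoint R p N)).mkQ
  calc
    tensorPoint R p _ (π q) = π.rTensor P (tensorPoint R p (N ⊗[R] P) q) :=
      (rTensor_tensorPoint p π q).symm
    _ = π.rTensor P ((tensorPoint R p N).rTensor P q) := congrArg _ hq.symm
    _ = (π ∘ₗ tensorPoint R p N).rTensor P q := (LinearMap.rTensor_comp_apply P π _ q).symm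
    _ = 0 := by rw [LinearMap.range_mkQ_comp, LinearMap.rTensor_zero, LinearMap.zero_apply]

theorem range_tensorPoint_eq_coinvariants
    (hinj : Function.Injective
      (tensorPoint R p ((N ⊗[R] P) ⧸ LinearMap.range (tensorPoint R p N)))) :
    LinearMap.range (tensorPoint R p N) = coinvariants R p N := by
  refine (range_tensorPoint_le_coinvariants p).antisymm fun q hq => ?_
  have class_eq_zero : (LinearMap.range (tensorPoint R p N)).mkQ q = 0 :=
    (map_eq_zero_iff _ hinj).mp (tensorPoint_mkQ_range_eq_zero p hq)
  exact (Submodule.Quotient.mk_eq_zero _).mp class_eq_zero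

end Ring

theorem pure_iff_unit_bijective_general (R : Type u) [CommRing R] {P : Type w} [AddCommGroup P]
    [Module R P] (p : P) :
    (∀ (N : Type (max v w)) [AddCommGroup N] [Module R N],
      Function.Injective (tensorPoint R p N)) ↔
    (∀ (N : Type (max v w)) [AddCommGroup N] [Module R N],
      Function.Injective (tensorPoint R p N) ∧
      Set.range (tensorPoint R p N) = coinvariants R p N) := by
  refine ⟨fun hpure N _ _ => ⟨hpure N, ?_⟩, fun hbij N _ _ => (hbij N).1⟩
  rw [← LinearMap.coe_range, range_tensorPoint_eq_coinvariants p (hpure _)]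

/-- `f : B → A` is pure as a morphism of `B`-modules iff for every `B`-module `N` the unit
map `η_N : N → (N ⊗_B A)^co`, `n ↦ n ⊗ 1`, is bijective (it is always well defined, so
bijectivity onto the coinvariants means: injective with range equal to the coinvariants). -/
theorem pure_iff_unit_bijective (B A : Type u) [CommRing B] [CommRing A] [Algebra B A] :
    (∀ (N : Type u) [AddCommGroup N] [Module B N],
      Function.Injective (unitMap B A N)) ↔
    (∀ (N : Type u) [AddCommGroup N] [Module B N],
      Function.Injective (unitMap B A N) ∧
      Set.range (unitMap B A N) =
        {q : N ⊗[B] A | coactMap B A N q = insMap B A N q}) :=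
  pure_iff_unit_bijective_general.{u, u, u} B (1 : A)
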